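/- Let R be a commutative ring and n ≥ 3 odd. The map d : G_{n-1}(R) → R^× defined by d(g) := l(g·g*) is a group homomorphism (i.e. l(gh·(gh)*) = l(g·g*)·l(h·h*) for all g, h ∈ G_{n-1}(R)), and its kernel equals SG_{n-1}(R); in particular SG_{n-1}(R) = {g ∈ G_{n-1}(R) : l(g·g*) = 1}. -/

import Mathlib

open Matrix

noncomputable section

/-- Reindexing equivalence `Fin (2 ^ n) ⊕ Fin (2 ^ n) ≃ Fin (2 ^ (n + 1))`. -/
def pow2Equiv (n : ℕ) : Fin (2 ^ n) ⊕ Fin (2 ^ n) ≃ Fin (2 ^ (n + 1)) :=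
  finSumFinEquiv.trans (finCongr (by rw [pow_succ]; ring))

/-- The Suslin matrix `S_n(v, w)` of size `2 ^ n` associated to `v, w : Fin (n+1) → R`. -/
def sus (R : Type) [CommRing R] : (n : ℕ) → (Fin (n + 1) → R) → (Fin (n + 1) → R) →
    Matrix (Fin (2 ^ n)) (Fin (2 ^ n)) R
  | 0, v, _ => v 0 • 1
  | n + 1, v, w =>
      Matrix.reindex (pow2Equiv n) (pow2Equiv n)
        (Matrix.fromBlocks (v 0 • 1) (sus R n (v ∘ Fin.succ) (w ∘ Fin.succ))
          (-(sus R n (w ∘ Fin.succ) (v ∘ Fin.succ))ᵀ) (w 0 • 1))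

/-- The conjugate Suslin matrix `S̄_n(v, w) = S_n(w, v)ᵀ`. -/
def susBar (R : Type) [CommRing R] (n : ℕ) (v w : Fin (n + 1) → R) :
    Matrix (Fin (2 ^ n)) (Fin (2 ^ n)) R :=
  (sus R n w v)ᵀ

/-- Suslin's matrices `J_n`. -/
def Jmat (R : Type) [CommRing R] : (n : ℕ) → Matrix (Fin (2 ^ n)) (Fin (2 ^ n)) R
  | 0 => 1
  | n + 1 =>
      if Even (n + 1) then
        Matrix.reindex (pow2Equiv n) (pow2Equiv n)
          (Matrix.fromBlocks (Jmat R n) 0 0 (-(Jmat R n)))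
      else
        Matrix.reindex (pow2Equiv n) (pow2Equiv n)
          (Matrix.fromBlocks 0 (Jmat R n) (-(Jmat R n)) 0)

/-- The involution `M ↦ M* = J_n · Mᵀ · J_nᵀ`. -/
def invol (R : Type) [CommRing R] (n : ℕ) (M : Matrix (Fin (2 ^ n)) (Fin (2 ^ n)) R) :
    Matrix (Fin (2 ^ n)) (Fin (2 ^ n)) R :=
  Jmat R n * Mᵀ * (Jmat R n)ᵀ

/-- `φ(v, w) = [[0, S_n(v,w)], [S̄_n(v,w), 0]]` (note the shift: vectors in `R^{n+1}`,
matrices of size `2 ^ (n + 1)`). -/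
def phiMat (R : Type) [CommRing R] (n : ℕ) (v w : Fin (n + 1) → R) :
    Matrix (Fin (2 ^ (n + 1))) (Fin (2 ^ (n + 1))) R :=
  Matrix.reindex (pow2Equiv n) (pow2Equiv n)
    (Matrix.fromBlocks 0 (sus R n v w) (susBar R n v w) 0)

/-- The set of Suslin matrices of size `2 ^ m`. -/
def SuslinSet (R : Type) [CommRing R] (m : ℕ) : Set (Matrix (Fin (2 ^ m)) (Fin (2 ^ m)) R) :=
  {S | ∃ v w : Fin (m + 1) → R, S = sus R m v w}

/-- The image of the hyperbolic space `R^{m+1} ⊕ R^{m+1}` inside the Clifford algebra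
`M_{2^{m+1}}(R)`. -/
def PhiSet (R : Type) [CommRing R] (m : ℕ) :
    Set (Matrix (Fin (2 ^ (m + 1))) (Fin (2 ^ (m + 1))) R) :=
  {x | ∃ v w : Fin (m + 1) → R, x = phiMat R m v w}

/-- The block diagonal matrix `diag(g₁, g₂)`. -/
def diagBlock (R : Type) [CommRing R] (m : ℕ)
    (g₁ g₂ : Matrix (Fin (2 ^ m)) (Fin (2 ^ m)) R) :
    Matrix (Fin (2 ^ (m + 1))) (Fin (2 ^ (m + 1))) R :=
  Matrix.reindex (pow2Equiv m) (pow2Equiv m) (Matrix.fromBlocks g₁ 0 0 g₂)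

/-- `Spin_{2(m+1)}(R)`, as the set of pairs `(g₁, g₂)` such that `x = diag(g₁, g₂)`
satisfies `x · x* = 1` and conjugation by `x` maps the image of the hyperbolic space
onto itself. -/
def SpinPair (R : Type) [CommRing R] (m : ℕ) :
    Set (Matrix (Fin (2 ^ m)) (Fin (2 ^ m)) R × Matrix (Fin (2 ^ m)) (Fin (2 ^ m)) R) :=
  {p | IsUnit p.1 ∧ IsUnit p.2 ∧
    diagBlock R m p.1 p.2 * invol R (m + 1) (diagBlock R m p.1 p.2) = 1 ∧
    (fun y => diagBlock R m p.1 p.2 * y * (diagBlock R m p.1 p.2)⁻¹) '' PhiSet R m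
      = PhiSet R m}

/-- The group `G_m(R)` of `g ∈ GL_{2^m}(R)` such that `g · S · g*` is a Suslin matrix
for every Suslin matrix `S`. -/
def GSet (R : Type) [CommRing R] (m : ℕ) : Set (Matrix (Fin (2 ^ m)) (Fin (2 ^ m)) R) :=
  {g | IsUnit g ∧ ∀ S ∈ SuslinSet R m, g * S * invol R m g ∈ SuslinSet R m}

/-- The group `SG_m(R)` of `g ∈ G_m(R)` preserving the length `l(S(v,w)) = v ⬝ᵥ w`. -/
def SGSet (R : Type) [CommRing R] (m : ℕ) : Set (Matrix (Fin (2 ^ m)) (Fin (2 ^ m)) R) :=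
  {g | g ∈ GSet R m ∧ ∀ v w v' w' : Fin (m + 1) → R,
    g * sus R m v w * invol R m g = sus R m v' w' → v' ⬝ᵥ w' = v ⬝ᵥ w}

/-- The hyperbolic quadratic form `q(v, w) = v ⬝ᵥ w` on `R^n ⊕ R^n`. -/
def hypForm (R : Type) [CommRing R] (n : ℕ) :
    QuadraticForm R ((Fin n → R) × (Fin n → R)) :=
  LinearMap.BilinMap.toQuadraticMap
    (LinearMap.mk₂ R (fun x y => x.1 ⬝ᵥ y.2)
      (fun x x' y => by simp [add_dotProduct])
      (fun c x y => by simp [smul_dotProduct])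
      (fun x y y' => by simp [dotProduct_add])
      (fun x c y => by simp [dotProduct_smul]))

/-- `E_i = S_m(e_i, 0)`. -/
def Emat (R : Type) [CommRing R] (m : ℕ) (i : Fin (m + 1)) :
    Matrix (Fin (2 ^ m)) (Fin (2 ^ m)) R :=
  sus R m (Pi.single i 1) 0

/-- `F_i = S_m(0, e_i)`. -/
def Fmat (R : Type) [CommRing R] (m : ℕ) (i : Fin (m + 1)) :
    Matrix (Fin (2 ^ m)) (Fin (2 ^ m)) R :=
  sus R m 0 (Pi.single i 1)


theorem sus_add (R : Type) [CommRing R] : ∀ (n : ℕ) (v w v' w' : Fin (n + 1) → R),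
    sus R n (v + v') (w + w') = sus R n v w + sus R n v' w' := by
  intro n
  induction n with
  | zero => intro v w v' w'; simp [sus, add_smul]
  | succ n ih =>
    intro v w v' w'
    have h1 : ∀ x y : Fin (n + 1 + 1) → R, (x + y) ∘ Fin.succ = x ∘ Fin.succ + y ∘ Fin.succ :=
      fun x y => rfl
    simp only [sus, h1, ih]
    ext i j
    obtain ⟨i, rfl⟩ := (pow2Equiv n).surjective i
    obtain ⟨j, rfl⟩ := (pow2Equiv n).surjective j
    rcases i with i | i <;> rcases j with j | j <;> simp [add_mul] <;> ring

theorem sus_smul (R : Type) [CommRing R] : ∀ (n : ℕ) (c : R) (v w : Fin (n + 1) → R),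
    sus R n (c • v) (c • w) = c • sus R n v w := by
  intro n
  induction n with
  | zero => intro c v w; simp [sus, mul_smul]
  | succ n ih =>
    intro c v w
    have h1 : ∀ x : Fin (n + 1 + 1) → R, (c • x) ∘ Fin.succ = c • (x ∘ Fin.succ) :=
      fun x => rfl
    simp only [sus, h1, ih]
    ext i j
    obtain ⟨i, rfl⟩ := (pow2Equiv n).surjective i
    obtain ⟨j, rfl⟩ := (pow2Equiv n).surjective j
    rcases i with i | i <;> rcases j with j | j <;> simp [mul_assoc]

theorem sus_inj_left (R : Type) [CommRing R] : ∀ (n : ℕ) (v w v' w' : Fin (n + 1) → R),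
    sus R n v w = sus R n v' w' → v = v' := by
  intro n
  induction n with
  | zero =>
    intro v w v' w' h
    have := congrFun (congrFun h 0) 0
    ext i
    fin_cases i
    simpa [sus] using this
  | succ n ih =>
    intro v w v' w' h
    simp only [sus] at h
    have h2 := (Matrix.reindex (pow2Equiv n) (pow2Equiv n)).injective h
    obtain ⟨ha, hb, hc, hd⟩ := Matrix.fromBlocks_inj.1 h2
    have h3 := ih _ _ _ _ hb
    let z : Fin (2 ^ n) := ⟨0, by positivity⟩
    have h0 : v 0 = v' 0 := by
      have := congrFun (congrFun ha z) z
      simpa using this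
    ext i
    refine Fin.cases h0 (fun j => congrFun h3 j) i

theorem sus_inj_right (R : Type) [CommRing R] (n : ℕ) (v w v' w' : Fin (n + 1 + 1) → R)
    (h : sus R (n + 1) v w = sus R (n + 1) v' w') : w = w' := by
  simp only [sus] at h
  have h2 := (Matrix.reindex (pow2Equiv n) (pow2Equiv n)).injective h
  obtain ⟨ha, hb, hc, hd⟩ := Matrix.fromBlocks_inj.1 h2
  have h3 := sus_inj_left R n _ _ _ _ (Matrix.transpose_injective (neg_injective hc))
  let z : Fin (2 ^ n) := ⟨0, by positivity⟩
  have h0 : w 0 = w' 0 := by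
    have := congrFun (congrFun hd z) z
    simpa using this
  ext i
  refine Fin.cases h0 (fun j => congrFun h3 j) i

theorem sus_mul_bar (R : Type) [CommRing R] : ∀ (n : ℕ) (v w : Fin (n + 1) → R),
    sus R n v w * (sus R n w v)ᵀ = (v ⬝ᵥ w) • 1 ∧
    (sus R n w v)ᵀ * sus R n v w = (v ⬝ᵥ w) • 1 := by
  intro n
  induction n with
  | zero => intro v w; simp [sus, dotProduct, smul_smul, mul_comm]
  | succ n ih =>
    intro v w
    obtain ⟨h1, h2⟩ := ih (v ∘ Fin.succ) (w ∘ Fin.succ)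
    have hd : v ⬝ᵥ w = v 0 * w 0 + (v ∘ Fin.succ) ⬝ᵥ (w ∘ Fin.succ) := by
      simp [dotProduct, Fin.sum_univ_succ]
    have hone : ∀ t : R, t • (1 : Matrix (Fin (2 ^ (n + 1))) (Fin (2 ^ (n + 1))) R)
        = Matrix.reindex (pow2Equiv n) (pow2Equiv n) (Matrix.fromBlocks (t • 1) 0 0 (t • 1)) := by
      intro t
      have := Matrix.fromBlocks_smul t (1 : Matrix (Fin (2 ^ n)) (Fin (2 ^ n)) R) 0 0
        (1 : Matrix (Fin (2 ^ n)) (Fin (2 ^ n)) R)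
      rw [smul_zero] at this
      rw [← this]
      ext i j
      simp [Matrix.one_apply]
    constructor
    · rw [hone, hd]
      simp only [sus, Matrix.reindex_apply, Matrix.transpose_submatrix,
        Matrix.submatrix_mul_equiv, Matrix.fromBlocks_transpose, Matrix.fromBlocks_multiply]
      congr 2
      · simp [h1, smul_smul, add_smul, mul_comm]
      · simp
      · simp
      · simp [h2, smul_smul, add_smul, mul_comm, add_comm]
    · rw [hone, hd]
      simp only [sus, Matrix.reindex_apply, Matrix.transpose_submatrix,
        Matrix.submatrix_mul_equiv, Matrix.fromBlocks_transpose, Matrix.fromBlocks_multiply]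
      congr 2
      · simp [h1, smul_smul, add_smul, mul_comm]
      · simp
      · simp
      · simp [h2, smul_smul, add_smul, add_comm, mul_comm]

/-- First index. -/
def zi (n : ℕ) : Fin (2 ^ (n + 1)) := pow2Equiv n (Sum.inl ⟨0, by positivity⟩)
/-- Middle index. -/
def mi (n : ℕ) : Fin (2 ^ (n + 1)) := pow2Equiv n (Sum.inr ⟨0, by positivity⟩)

/-- The conjugation extended linearly to all matrices. -/
def barM (R : Type) [CommRing R] (n : ℕ) (M : Matrix (Fin (2 ^ (n + 1))) (Fin (2 ^ (n + 1))) R) :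
    Matrix (Fin (2 ^ (n + 1))) (Fin (2 ^ (n + 1))) R :=
  (M (zi n) (zi n) + M (mi n) (mi n)) • 1 - M

theorem barM_sus (R : Type) [CommRing R] (n : ℕ) (v w : Fin (n + 1 + 1) → R) :
    barM R n (sus R (n + 1) v w) = (sus R (n + 1) w v)ᵀ := by
  simp only [barM, zi, mi, sus]
  ext i j
  obtain ⟨i, rfl⟩ := (pow2Equiv n).surjective i
  obtain ⟨j, rfl⟩ := (pow2Equiv n).surjective j
  rcases i with i | i <;> rcases j with j | j <;>
    simp [Matrix.one_apply] <;> by_cases h : i = j <;> simp [h, eq_comm]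

theorem Jmat_tr (R : Type) [CommRing R] : ∀ n : ℕ, (Jmat R n)ᵀ * Jmat R n = 1 := by
  intro n
  induction n with
  | zero => simp [Jmat]
  | succ n ih =>
    simp only [Jmat]
    split_ifs <;>
    simp [Matrix.fromBlocks_transpose, Matrix.fromBlocks_multiply, Matrix.transpose_submatrix, ih]

theorem invol_mul (R : Type) [CommRing R] (n : ℕ) (g h : Matrix (Fin (2 ^ n)) (Fin (2 ^ n)) R) :
    invol R n (g * h) = invol R n h * invol R n g := by
  have h1 : invol R n h * invol R n g =
      Jmat R n * hᵀ * ((Jmat R n)ᵀ * Jmat R n) * gᵀ * (Jmat R n)ᵀ := by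
    simp only [invol, Matrix.mul_assoc]
  rw [h1, Jmat_tr]
  simp [invol, Matrix.mul_assoc]

theorem invol_one (R : Type) [CommRing R] (n : ℕ) : invol R n 1 = 1 := by
  simp [invol, mul_eq_one_comm.1 (Jmat_tr R n)]

theorem invol_unit (R : Type) [CommRing R] (n : ℕ) (g : Matrix (Fin (2 ^ n)) (Fin (2 ^ n)) R)
    (hg : IsUnit g) : IsUnit (invol R n g) := by
  obtain ⟨h, h1, h2⟩ := isUnit_iff_exists.1 hg
  refine isUnit_iff_exists.2 ⟨invol R n h, ?_, ?_⟩
  · rw [← invol_mul, h2, invol_one]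
  · rw [← invol_mul, h1, invol_one]

theorem sus_one (R : Type) [CommRing R] (n : ℕ) :
    sus R (n + 1) (Pi.single 0 1) (Pi.single 0 1) = 1 := by
  have h0 : (Pi.single 0 1 : Fin (n + 1 + 1) → R) ∘ Fin.succ = 0 := by
    ext i; simp
  have h1 : sus R n 0 0 = 0 := by
    have := sus_smul R n 0 0 0
    simpa using this
  simp only [sus, h0, h1]
  simp

/-- A linear map which is pointwise a multiple on vectors of length one is a global multiple. -/
theorem abstract_scalar {R : Type} [CommRing R] {M : Type} [AddCommGroup M] [Module R M] (k : ℕ)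
    (hk : 3 ≤ k) (P s : ((Fin k → R) × (Fin k → R)) →ₗ[R] M) (hs : Function.Injective s)
    (h : ∀ x, x.1 ⬝ᵥ x.2 = 1 → ∃ c : R, P x = c • s x) : ∃ c : R, P = c • s := by
  classical
  have hH : ∀ i : Fin k, ∃ c : R, P (Pi.single i 1, Pi.single i 1)
      = c • s (Pi.single i 1, Pi.single i 1) := fun i => h _ (by simp)
  choose c hc using hH
  have exj : ∀ i j : Fin k, ∃ l : Fin k, l ≠ i ∧ l ≠ j := by
    intro i j
    have : ∃ l ∈ (Finset.univ : Finset (Fin k)), l ∉ ({i, j} : Finset (Fin k)) := by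
      apply Finset.exists_mem_notMem_of_card_lt_card
      have := Finset.card_le_two (a := i) (b := j)
      simp; omega
    obtain ⟨l, _, hl⟩ := this
    simp at hl
    exact ⟨l, hl.1, hl.2⟩
  -- the main step
  have key : ∀ (j : Fin k) (a b : R), a * b = 0 → ∀ i, i ≠ j →
      P (Pi.single j a, Pi.single j b) = c i • s (Pi.single j a, Pi.single j b) := by
    intro j a b hab
    have step : ∀ i, i ≠ j → ∃ d : R, P (Pi.single j a, Pi.single j b) =
        s ((d - c i) • (Pi.single i 1, Pi.single i 1) + d • (Pi.single j a, Pi.single j b)) := by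
      intro i hij
      obtain ⟨d, hd⟩ := h ((Pi.single i 1, Pi.single i 1) + (Pi.single j a, Pi.single j b))
        (by simp [hab, hij, hij.symm])
      refine ⟨d, ?_⟩
      rw [map_add, hc] at hd
      rw [map_add, map_smul, map_smul, eq_sub_of_add_eq' hd, map_add, smul_add, sub_smul]
      abel
    intro i hij
    obtain ⟨i', hi', hj'⟩ := exj i j
    obtain ⟨d, hd⟩ := step i hij
    obtain ⟨d', hd'⟩ := step i' hj'
    have e := hs (hd.symm.trans hd')
    have e1 := congrFun (congrArg Prod.fst e) i
    have e2 : d - c i = 0 := by simpa [hij, hi'.symm, hij.symm, hi'] using e1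
    rw [hd, e2, sub_eq_zero.1 e2]
    simp [← map_smul]
  have hcc : ∀ i i', c i = c i' := by
    intro i i'
    obtain ⟨j, h1, h2⟩ := exj i i'
    have e := (key j 1 0 (by simp) i h1.symm).symm.trans (key j 1 0 (by simp) i' h2.symm)
    rw [← map_smul, ← map_smul] at e
    have e1 := congrFun (congrArg Prod.fst (hs e)) j
    simpa using e1
  refine ⟨c ⟨0, by omega⟩, ?_⟩
  apply LinearMap.prod_ext
  · apply LinearMap.pi_ext'
    intro j
    ext
    obtain ⟨i, h1, -⟩ := exj j j
    have := key j 1 0 (by simp) i h1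
    rw [hcc i ⟨0, by omega⟩] at this
    simpa using this
  · apply LinearMap.pi_ext'
    intro j
    ext
    obtain ⟨i, h1, -⟩ := exj j j
    have := key j 0 1 (by simp) i h1
    rw [hcc i ⟨0, by omega⟩] at this
    simpa using this

/-- The similitude property. -/
theorem similitude (R : Type) [CommRing R] (n : ℕ) (hn : 1 ≤ n)
    (g : Matrix (Fin (2 ^ (n + 1))) (Fin (2 ^ (n + 1))) R) (hg : g ∈ GSet R (n + 1)) :
    ∃ c : R, ∀ v w v' w' : Fin (n + 1 + 1) → R,
      g * sus R (n + 1) v w * invol R (n + 1) g = sus R (n + 1) v' w' →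
      v' ⬝ᵥ w' = c * (v ⬝ᵥ w) := by
  obtain ⟨hu, hS⟩ := hg
  obtain ⟨gi, hgi, hig⟩ := isUnit_iff_exists.1 hu
  set gs := invol R (n + 1) g with hgs
  let P : ((Fin (n + 1 + 1) → R) × (Fin (n + 1 + 1) → R)) →ₗ[R]
      Matrix (Fin (2 ^ (n + 1))) (Fin (2 ^ (n + 1))) R :=
    { toFun := fun x => gs * barM R n (g * sus R (n + 1) x.1 x.2 * gs) * g
      map_add' := by
        intro x y
        rw [← Matrix.add_mul, ← Matrix.mul_add]
        congr 2
        simp only [Prod.fst_add, Prod.snd_add, sus_add, Matrix.mul_add, Matrix.add_mul, barM,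
          Matrix.add_apply, add_smul]
        abel
      map_smul' := by
        intro r x
        simp only [Prod.smul_fst, Prod.smul_snd, sus_smul, RingHom.id_apply]
        rw [← Matrix.smul_mul, ← Matrix.mul_smul]
        congr 2
        simp [barM, smul_sub, smul_smul, mul_add] }
  let s : ((Fin (n + 1 + 1) → R) × (Fin (n + 1 + 1) → R)) →ₗ[R]
      Matrix (Fin (2 ^ (n + 1))) (Fin (2 ^ (n + 1))) R :=
    { toFun := fun x => (sus R (n + 1) x.2 x.1)ᵀ
      map_add' := by
        intro x y
        simp [sus_add]
      map_smul' := by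
        intro r x
        simp [sus_smul] }
  have hs : Function.Injective s := by
    intro x y hxy
    have hxy' := Matrix.transpose_injective hxy
    exact Prod.ext (sus_inj_right R n _ _ _ _ hxy') (sus_inj_left R (n + 1) _ _ _ _ hxy')
  have hP : ∀ v w v' w' : Fin (n + 1 + 1) → R, g * sus R (n + 1) v w * gs = sus R (n + 1) v' w' →
      sus R (n + 1) v w * P (v, w) = (v' ⬝ᵥ w') • 1 := by
    intro v w v' w' h
    have h1 : P (v, w) = gs * (sus R (n + 1) w' v')ᵀ * g := by
      change gs * barM R n (g * sus R (n + 1) v w * gs) * g = _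
      rw [h, barM_sus]
    have h2 := (sus_mul_bar R (n + 1) v' w').1
    rw [← h] at h2
    rw [h1]
    calc sus R (n + 1) v w * (gs * (sus R (n + 1) w' v')ᵀ * g)
        = (gi * g) * (sus R (n + 1) v w * (gs * (sus R (n + 1) w' v')ᵀ * g)) := by
          rw [hig, Matrix.one_mul]
      _ = gi * (g * sus R (n + 1) v w * gs * (sus R (n + 1) w' v')ᵀ) * g := by
          simp only [Matrix.mul_assoc]
      _ = _ := by rw [h2]; simp [hig]
  obtain ⟨c, hc⟩ := abstract_scalar (n + 1 + 1) (by omega) P s hs (by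
    rintro ⟨v, w⟩ hvw
    obtain ⟨v', w', h⟩ := hS _ ⟨v, w, rfl⟩
    refine ⟨v' ⬝ᵥ w', ?_⟩
    have h1 := hP v w v' w' h
    have h2 := (sus_mul_bar R (n + 1) v w).2
    have hvw' : v ⬝ᵥ w = 1 := hvw
    rw [hvw', one_smul] at h2
    have h3 := congrArg (fun z => (sus R (n + 1) w v)ᵀ * z) h1
    simp only [← Matrix.mul_assoc, h2] at h3
    simpa [s] using h3)
  refine ⟨c, fun v w v' w' h => ?_⟩
  have h1 := hP v w v' w' h
  rw [hc] at h1
  have h2 : sus R (n + 1) v w * (c • s) (v, w) = (c * (v ⬝ᵥ w)) • 1 := by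
    change sus R (n + 1) v w * (c • (sus R (n + 1) w v)ᵀ) = _
    rw [Matrix.mul_smul, (sus_mul_bar R (n + 1) v w).1, smul_smul]
  rw [h2] at h1
  have := congrFun (congrFun h1 (zi n)) (zi n)
  simpa using this.symm

theorem sus_unit_length (R : Type) [CommRing R] (n : ℕ) (a b : Fin (n + 1 + 1) → R)
    (h : IsUnit (sus R (n + 1) a b)) : IsUnit (a ⬝ᵥ b) := by
  obtain ⟨Y, h1, h2⟩ := isUnit_iff_exists.1 h
  set X := sus R (n + 1) a b with hX
  have h3 := (sus_mul_bar R (n + 1) a b).1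
  rw [← barM_sus, ← hX] at h3
  have h4 : barM R n X = (a ⬝ᵥ b) • Y := by
    have := congrArg (fun z => Y * z) h3
    simp only [← Matrix.mul_assoc, h2] at this
    simpa using this
  have h5 : X = barM R n (barM R n X) := by
    rw [hX, barM_sus]
    have e := barM_sus R n a b
    simp only [barM] at e ⊢
    rw [← e]
    simp [add_comm]
  rw [h4] at h5
  have h6 : X = (a ⬝ᵥ b) • barM R n Y := by
    rw [h5]
    simp [barM, smul_sub, smul_smul, mul_add]
  rw [h6, Matrix.smul_mul] at h1
  have h7 := congrFun (congrFun h1 (zi n)) (zi n)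
  simp only [Matrix.smul_apply, Matrix.one_apply_eq, smul_eq_mul] at h7
  exact IsUnit.of_mul_eq_one _ h7

/-- for odd `n ≥ 3` (here `n = m + 1`), the map `d(g) = l(g·g*)` is a group
homomorphism `G_{n-1}(R) → R^×` whose kernel is `SG_{n-1}(R)`; i.e. `l(g·g*)` is a unit,
`l(gh·(gh)*) = l(g·g*)·l(h·h*)`, and `l(g·g*) = 1 ↔ g ∈ SG_{n-1}(R)`. -/
theorem length_hom_kernel (R : Type) [CommRing R] (m : ℕ) (hm : 2 ≤ m)
    (hodd : Odd (m + 1)) :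
    (∀ g ∈ GSet R m, ∀ a b : Fin (m + 1) → R,
      g * invol R m g = sus R m a b → IsUnit (a ⬝ᵥ b)) ∧
    (∀ g ∈ GSet R m, ∀ h ∈ GSet R m, ∀ a b c d p q : Fin (m + 1) → R,
      g * invol R m g = sus R m a b → h * invol R m h = sus R m c d →
      (g * h) * invol R m (g * h) = sus R m p q →
      p ⬝ᵥ q = (a ⬝ᵥ b) * (c ⬝ᵥ d)) ∧
    (∀ g ∈ GSet R m, ∀ a b : Fin (m + 1) → R,
      g * invol R m g = sus R m a b → (a ⬝ᵥ b = 1 ↔ g ∈ SGSet R m)) := by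
  obtain ⟨n, rfl⟩ : ∃ n, m = n + 1 := ⟨m - 1, by omega⟩
  have hn : 1 ≤ n := by omega
  have hlen : ∀ g ∈ GSet R (n + 1), ∀ a b : Fin (n + 1 + 1) → R,
      g * invol R (n + 1) g = sus R (n + 1) a b → ∀ v w v' w' : Fin (n + 1 + 1) → R,
      g * sus R (n + 1) v w * invol R (n + 1) g = sus R (n + 1) v' w' →
      v' ⬝ᵥ w' = (a ⬝ᵥ b) * (v ⬝ᵥ w) := by
    intro g hg a b hab
    obtain ⟨c, hc⟩ := similitude R n hn g hg
    have h1 := hc (Pi.single 0 1) (Pi.single 0 1) a b (by rw [sus_one, Matrix.mul_one, hab])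
    have h2 : a ⬝ᵥ b = c := by simpa using h1
    rw [h2]
    exact hc
  refine ⟨?_, ?_, ?_⟩
  · intro g hg a b hab
    apply sus_unit_length R n
    rw [← hab]
    exact hg.1.mul (invol_unit R _ g hg.1)
  · intro g hg h hh a b c d p q hab hcd hpq
    refine hlen g hg a b hab c d p q ?_
    rw [← hpq, ← hcd, invol_mul]
    simp only [Matrix.mul_assoc]
  · intro g hg a b hab
    constructor
    · intro h1
      refine ⟨hg, fun v w v' w' h => ?_⟩
      rw [hlen g hg a b hab v w v' w' h, h1, one_mul]
    · rintro ⟨-, h⟩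
      have := h (Pi.single 0 1) (Pi.single 0 1) a b (by rw [sus_one, Matrix.mul_one, hab])
      simpa using this
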